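/- arXiv:2002.02743 — 6 statements merged into one kernel-verified Lean document; each statement's English description precedes it below -/
import Mathlib

section
/- Let S ⊆ M_n(ℂ) be a linear subspace that is self-adjoint and contains I_n (a noncommutative graph). Then the minimum k for which there exist m ∈ ℕ and matrices E_1,…,E_m ∈ M_{k×n}(ℂ) with ∑_{i=1}^m E_i† E_i = I_n and E_i† E_j ∈ S for all i,j ∈ [m] equals min{rank(B) : m ∈ ℕ, B an m×m block matrix with all blocks B_{i,j} ∈ S, B positive semidefinite, and ∑_{i=1}^m B_{i,i} = I_n}. -/
/-!
Stacking Kraus operators `E_1, …, E_m ∈ M_{k×n}(ℂ)` side by side gives a `k × mn` matrix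
`F = [E_1 ⋯ E_m]`, and the blocks of `Fᴴ * F` are exactly the products `E_iᴴ * E_j`.
Hence a Kraus family with output dimension `k` yields an admissible positive semidefinite block
matrix of rank at most `k`. Conversely, the spectral theorem factors a positive semidefinite `B`
of rank `r` as `Fᴴ * F` with `F` having `r` rows (`exists_rank_factorization`), and the
block columns of `F` are Kraus operators with output dimension `r`. Since `1 ∈ S`, the identity
channel shows that both sets are nonempty, so the natural-number infima are genuine minima.
-/

open Matrix ComplexOrder

noncomputable section

/-- The `(i,j)` block of an `m × m` block matrix with `ι × ι` blocks. -/
def blockOf {m : ℕ} {ι : Type} (B : Matrix (Fin m × ι) (Fin m × ι) ℂ)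
    (i j : Fin m) : Matrix ι ι ℂ :=
  Matrix.of fun a b => B (i, a) (j, b)

/-- A positive semidefinite matrix is a Gram matrix `Fᴴ * F` where `F` has only `rank B` rows:
row `s` is the conjugate of the eigenvector of the `s`-th nonzero eigenvalue `μ`, scaled by
`√μ`. -/
lemma exists_rank_factorization {ι : Type} [Fintype ι] [DecidableEq ι] {B : Matrix ι ι ℂ}
    (hB : B.PosSemidef) : ∃ F : Matrix (Fin B.rank) ι ℂ, Fᴴ * F = B := by
  have hH := hB.isHermitian
  have hcard : Fintype.card {i // hH.eigenvalues i ≠ 0} = B.rank :=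
    hH.rank_eq_card_non_zero_eigs.symm
  let e : Fin B.rank ≃ {i // hH.eigenvalues i ≠ 0} := (Fintype.equivFinOfCardEq hcard).symm
  let U : Matrix ι ι ℂ := hH.eigenvectorUnitary
  refine ⟨Matrix.of fun s a => (Real.sqrt (hH.eigenvalues (e s)) : ℂ) * star (U a (e s)), ?_⟩
  have hspec : B = U * diagonal (fun i => (hH.eigenvalues i : ℂ)) * Uᴴ := hH.spectral_theorem
  ext a b
  have hBab : B a b = ∑ i, U a i * (hH.eigenvalues i : ℂ) * star (U b i) := by
    conv_lhs => rw [hspec]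
    rw [Matrix.mul_apply]
    simp only [Matrix.mul_diagonal, conjTranspose_apply]
  -- Only the nonzero eigenvalues contribute to the spectral sum.
  have hsub : ∑ i, U a i * (hH.eigenvalues i : ℂ) * star (U b i)
      = ∑ i : {i // hH.eigenvalues i ≠ 0},
        U a i * (hH.eigenvalues i : ℂ) * star (U b i) := by
    rw [← Finset.sum_subtype (Finset.univ.filter fun i => hH.eigenvalues i ≠ 0) (by simp)
      (fun i => U a i * (hH.eigenvalues i : ℂ) * star (U b i)), Finset.sum_filter_of_ne]
    rintro i - hne h0
    simp [h0] at hne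
  rw [hBab, hsub, ← e.sum_comp, Matrix.mul_apply]
  refine Finset.sum_congr rfl fun s _ => ?_
  have hsq : (Real.sqrt (hH.eigenvalues (e s)) : ℂ) * (Real.sqrt (hH.eigenvalues (e s)) : ℂ)
      = (hH.eigenvalues (e s) : ℂ) := by
    rw [← Complex.ofReal_mul, Real.mul_self_sqrt (hB.eigenvalues_nonneg _)]
  rw [← hsq]
  simp only [conjTranspose_apply, of_apply, star_mul', RCLike.star_def,
    Complex.conj_ofReal, Complex.conj_conj]
  ring

/-- The blocks of a Gram matrix are the products of the block columns of its factor. -/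
lemma blockOf_conjTranspose_mul_self {m k : ℕ} {ι : Type}
    (F : Matrix (Fin k) (Fin m × ι) ℂ) (i j : Fin m) :
    blockOf (Fᴴ * F) i j =
      (Matrix.of fun s a => F s (i, a))ᴴ * (Matrix.of fun s a => F s (j, a)) := by
  ext a b
  simp [blockOf, Matrix.mul_apply]

/-- For a noncommutative graph `S ⊆ M_n(ℂ)`, the smallest `k` admitting Choi–Kraus operators
`E_1, …, E_m ∈ M_{k×n}(ℂ)` with `∑ Eᵢ† Eᵢ = I` and all `Eᵢ† Eⱼ ∈ S` equals the minimum rank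
of a positive semidefinite block matrix with blocks in `S` whose diagonal blocks sum to `I`. -/
theorem xi_channel_eq_psd_block_formulation (n : ℕ)
    (S : Submodule ℂ (Matrix (Fin n) (Fin n) ℂ))
    (hstar : ∀ A ∈ S, Aᴴ ∈ S) (hone : (1 : Matrix (Fin n) (Fin n) ℂ) ∈ S) :
    sInf { k : ℕ | ∃ m : ℕ, ∃ E : Fin m → Matrix (Fin k) (Fin n) ℂ,
        (∑ i, (E i)ᴴ * E i) = 1 ∧ ∀ i j : Fin m, (E i)ᴴ * E j ∈ S } =
    sInf { k : ℕ | ∃ m : ℕ, ∃ B : Matrix (Fin m × Fin n) (Fin m × Fin n) ℂ,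
        (∀ i j : Fin m, blockOf B i j ∈ S) ∧ B.PosSemidef ∧
        (∑ i : Fin m, blockOf B i i) = 1 ∧ B.rank = k } := by
  have hTT : ∀ k : ℕ, ∀ m : ℕ, ∀ E : Fin m → Matrix (Fin k) (Fin n) ℂ,
      (∑ i, (E i)ᴴ * E i) = 1 → (∀ i j : Fin m, (E i)ᴴ * E j ∈ S) →
      ∃ k' ≤ k, ∃ m : ℕ, ∃ B : Matrix (Fin m × Fin n) (Fin m × Fin n) ℂ,
        (∀ i j : Fin m, blockOf B i j ∈ S) ∧ B.PosSemidef ∧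
        (∑ i : Fin m, blockOf B i i) = 1 ∧ B.rank = k' := by
    intro k m E hsum hmem
    let F : Matrix (Fin k) (Fin m × Fin n) ℂ := Matrix.of fun s p => E p.1 s p.2
    have hblock : ∀ i j, blockOf (Fᴴ * F) i j = (E i)ᴴ * E j :=
      blockOf_conjTranspose_mul_self F
    refine ⟨(Fᴴ * F).rank, ?_, m, Fᴴ * F, ?_, posSemidef_conjTranspose_mul_self F, ?_, rfl⟩
    · rw [rank_conjTranspose_mul_self]
      simpa using F.rank_le_card_height
    · intro i j
      rw [hblock]
      exact hmem i j
    · simpa only [hblock] using hsum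
  apply le_antisymm
  · -- The identity channel (`m = 1`, `E_1 = 1`) makes the set of ranks nonempty.
    obtain ⟨k₀, -, hk₀⟩ := hTT n 1 (fun _ => 1) (by simp) (by simpa using hone)
    refine le_csInf ⟨k₀, hk₀⟩ ?_
    rintro k ⟨m, B, hmem, hpsd, hsum, rfl⟩
    obtain ⟨F, hF⟩ := exists_rank_factorization hpsd
    have hblock := blockOf_conjTranspose_mul_self F
    rw [hF] at hblock
    refine Nat.sInf_le ⟨m, fun i => Matrix.of fun s a => F s (i, a), ?_, ?_⟩
    · simpa only [← hblock] using hsum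
    · intro i j
      rw [← hblock]
      exact hmem i j
  · refine le_csInf ⟨n, 1, fun _ => 1, by simp, by simpa using hone⟩ ?_
    rintro k ⟨m, E, hsum, hmem⟩
    obtain ⟨k', hle, hk'⟩ := hTT k m E hsum hmem
    exact (Nat.sInf_le hk').trans hle
end
end

section
/- Let S ⊆ M_n(ℂ) and T ⊆ M_{n'}(ℂ) be noncommutative graphs. Then H(S ⊗ T) ≤ H(S)·H(T), where S ⊗ T = span{A ⊗ B : A ∈ S, B ∈ T} ⊆ M_{nn'}(ℂ) is the span of Kronecker products. -/
/-!
Given optimal block matrices `B` for `S` (with `m × m` blocks) and `C` for `T` (with `m' × m'`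
blocks), the Kronecker product `B ⊗ₖ C`, with rows and columns regrouped, is an
`(m m') × (m m')` block matrix whose `((i, i'), (j, j'))` block is `B i j ⊗ₖ C i' j'`
(`blockOf_tensorBlock`). Its blocks thus lie in `S ⊗ T`, and its diagonal blocks sum to
`(∑ B i i) ⊗ₖ (∑ C i' i') = 1`. Its rank is at most `rank B * rank C`, as is seen by taking the
Kronecker product of rank factorizations of `B` and `C` (`exists_rank_factorization`).
-/

open Matrix Kronecker

noncomputable section

/-- The Haemers bound of a noncommutative graph `S ⊆ M_ι(ℂ)`. -/
def Haemers {ι : Type} [Fintype ι] [DecidableEq ι]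
    (S : Submodule ℂ (Matrix ι ι ℂ)) : ℕ :=
  sInf { k : ℕ | ∃ m : ℕ, ∃ B : Matrix (Fin m × ι) (Fin m × ι) ℂ,
    (∀ i j : Fin m, blockOf B i j ∈ S) ∧
    (∑ i : Fin m, blockOf B i i) = 1 ∧ B.rank = k }

/-- Tensor product of matrix subspaces: the span of the Kronecker products. -/
def tensorSub {ι κ : Type} (S : Submodule ℂ (Matrix ι ι ℂ))
    (T : Submodule ℂ (Matrix κ κ ℂ)) :
    Submodule ℂ (Matrix (ι × κ) (ι × κ) ℂ) :=
  Submodule.span ℂ { C | ∃ A ∈ S, ∃ B ∈ T, C = A ⊗ₖ B }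

lemma exists_rank_factorization_s4 {α : Type} [Fintype α] (A : Matrix α α ℂ) :
    ∃ (X : Matrix α (Fin A.rank) ℂ) (Y : Matrix (Fin A.rank) α ℂ), A = X * Y := by
  classical
  -- The columns of `X` form a basis of the column space; `Y` holds the coordinates of the columns.
  let b : Module.Basis (Fin A.rank) ℂ (LinearMap.range A.mulVecLin) := Module.finBasis ℂ _
  let c : α → LinearMap.range A.mulVecLin := fun j => ⟨A.mulVecLin (Pi.single j 1), ⟨_, rfl⟩⟩
  refine ⟨Matrix.of fun i k => (b k : α → ℂ) i, Matrix.of fun k j => b.repr (c j) k, ?_⟩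
  ext i j
  have h := congrArg (fun v : LinearMap.range A.mulVecLin => (v : α → ℂ) i) (b.sum_repr (c j))
  simp only [c, Submodule.coe_sum, Submodule.coe_smul, Finset.sum_apply, Pi.smul_apply,
    smul_eq_mul, Matrix.mulVecLin_apply, Matrix.mulVec_single_one, Matrix.col_apply] at h
  rw [Matrix.mul_apply, ← h]
  exact Finset.sum_congr rfl fun k _ => by
    simp [c, mul_comm]

/-- The regrouping of indices that turns `B ⊗ₖ C` into a block matrix indexed by pairs of block
indices, a pair being encoded as an element of `Fin (m * m')`. -/
def tensorIndex {m m' : ℕ} {ι κ : Type} (p : Fin (m * m') × (ι × κ)) :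
    (Fin m × ι) × (Fin m' × κ) :=
  (((finProdFinEquiv.symm p.1).1, p.2.1), ((finProdFinEquiv.symm p.1).2, p.2.2))

/-- The Kronecker product of two block matrices, viewed as a block matrix. -/
def tensorBlock {m m' : ℕ} {ι κ : Type} (B : Matrix (Fin m × ι) (Fin m × ι) ℂ)
    (C : Matrix (Fin m' × κ) (Fin m' × κ) ℂ) :
    Matrix (Fin (m * m') × (ι × κ)) (Fin (m * m') × (ι × κ)) ℂ :=
  (B ⊗ₖ C).submatrix tensorIndex tensorIndex

lemma blockOf_tensorBlock {m m' : ℕ} {ι κ : Type} (B : Matrix (Fin m × ι) (Fin m × ι) ℂ)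
    (C : Matrix (Fin m' × κ) (Fin m' × κ) ℂ) (p q : Fin (m * m')) :
    blockOf (tensorBlock B C) p q =
      blockOf B (finProdFinEquiv.symm p).1 (finProdFinEquiv.symm q).1 ⊗ₖ
        blockOf C (finProdFinEquiv.symm p).2 (finProdFinEquiv.symm q).2 :=
  rfl

lemma rank_tensorBlock_le {m m' : ℕ} {ι κ : Type} [Fintype ι] [Fintype κ]
    (B : Matrix (Fin m × ι) (Fin m × ι) ℂ) (C : Matrix (Fin m' × κ) (Fin m' × κ) ℂ) :
    (tensorBlock B C).rank ≤ B.rank * C.rank := by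
  obtain ⟨X, Y, hB⟩ := exists_rank_factorization_s4 B
  obtain ⟨Z, W, hC⟩ := exists_rank_factorization_s4 C
  have h : tensorBlock B C =
      (X ⊗ₖ Z).submatrix tensorIndex id * (Y ⊗ₖ W).submatrix id tensorIndex := by
    rw [← Matrix.submatrix_mul _ _ _ _ _ Function.bijective_id, ← Matrix.mul_kronecker_mul,
      ← hB, ← hC, tensorBlock]
  rw [h]
  refine (Matrix.rank_mul_le_left _ _).trans ((Matrix.rank_le_card_width _).trans ?_)
  simp

lemma sum_blockOf_tensorBlock {m m' : ℕ} {ι κ : Type} (B : Matrix (Fin m × ι) (Fin m × ι) ℂ)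
    (C : Matrix (Fin m' × κ) (Fin m' × κ) ℂ) :
    ∑ p, blockOf (tensorBlock B C) p p = (∑ i, blockOf B i i) ⊗ₖ (∑ j, blockOf C j j) := by
  simp only [blockOf_tensorBlock]
  rw [finProdFinEquiv.symm.sum_comp (fun x => blockOf B x.1 x.1 ⊗ₖ blockOf C x.2 x.2),
    Fintype.sum_prod_type]
  ext a b
  simp only [Matrix.sum_apply, Matrix.kroneckerMap_apply, Finset.sum_mul_sum]

/-- If `1 ∈ S` then the minimum defining `Haemers S` is over a nonempty set, hence attained. -/
lemma exists_haemers {ι : Type} [Fintype ι] [DecidableEq ι] (S : Submodule ℂ (Matrix ι ι ℂ))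
    (h1 : (1 : Matrix ι ι ℂ) ∈ S) :
    ∃ m : ℕ, ∃ B : Matrix (Fin m × ι) (Fin m × ι) ℂ,
      (∀ i j : Fin m, blockOf B i j ∈ S) ∧
      (∑ i : Fin m, blockOf B i i) = 1 ∧ B.rank = Haemers S := by
  refine Nat.sInf_mem (s := { k : ℕ | ∃ m : ℕ, ∃ B : Matrix (Fin m × ι) (Fin m × ι) ℂ,
    (∀ i j : Fin m, blockOf B i j ∈ S) ∧
    (∑ i : Fin m, blockOf B i i) = 1 ∧ B.rank = k }) ?_
  -- The identity itself, as a `1 × 1` block matrix, is admissible.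
  let B : Matrix (Fin 1 × ι) (Fin 1 × ι) ℂ := Matrix.of fun p q => (1 : Matrix ι ι ℂ) p.2 q.2
  have hB : ∀ i j, blockOf B i j = 1 := fun i j => rfl
  exact ⟨_, 1, B, fun i j => (hB i j).symm ▸ h1, by simp [hB], rfl⟩

/-- The Haemers bound of noncommutative graphs is submultiplicative under tensor products. -/
theorem haemers_tensor_le (n n' : ℕ)
    (S : Submodule ℂ (Matrix (Fin n) (Fin n) ℂ))
    (T : Submodule ℂ (Matrix (Fin n') (Fin n') ℂ))
    (hSstar : ∀ A ∈ S, Aᴴ ∈ S) (hSone : (1 : Matrix (Fin n) (Fin n) ℂ) ∈ S)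
    (hTstar : ∀ A ∈ T, Aᴴ ∈ T) (hTone : (1 : Matrix (Fin n') (Fin n') ℂ) ∈ T) :
    Haemers (tensorSub S T) ≤ Haemers S * Haemers T := by
  obtain ⟨m, B, hBS, hB1, hBr⟩ := exists_haemers S hSone
  obtain ⟨m', C, hCT, hC1, hCr⟩ := exists_haemers T hTone
  rw [← hBr, ← hCr]
  refine le_trans (Nat.sInf_le ⟨m * m', tensorBlock B C, fun p q => ?_, ?_, rfl⟩)
    (rank_tensorBlock_le B C)
  · rw [blockOf_tensorBlock]
    exact Submodule.subset_span ⟨_, hBS _ _, _, hCT _ _, rfl⟩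
  · rw [sum_blockOf_tensorBlock, hB1, hC1, Matrix.one_kronecker_one]
end
end

section
/- Let S ⊆ M_n(ℂ) be a noncommutative graph. Then α(S) ≤ H(S): if |ψ_1⟩,…,|ψ_ℓ⟩ ∈ ℂ^n are unit vectors with ⟨ψ_i|A|ψ_j⟩ = 0 for all distinct i,j ∈ [ℓ] and all A ∈ S, and B is an m×m block matrix with all blocks in S and ∑_{i=1}^m B_{i,i} = I_n, then rank(B) ≥ ℓ. -/
/-!
For each `k` the numbers `⟨ψ_k|B_{i,i}|ψ_k⟩` sum to `1`, so some index `p k` makes one of them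
nonzero. Let `V` be the matrix with columns `e_{p k} ⊗ ψ_k`. The `(k, l)` entry of `Vᴴ B V` is
`⟨ψ_k|B_{p k, p l}|ψ_l⟩` (`compress_apply`), which vanishes for `k ≠ l` because the blocks lie in
`S`. Hence `Vᴴ B V` is diagonal with nonzero diagonal, so it has rank `ℓ`, and
`rank (Vᴴ B V) ≤ rank B`.
-/

open Matrix

noncomputable section

/-- The matrix whose `k`-th column is `e_{p k} ⊗ ψ_k`. -/
def selector {n ℓ m : ℕ} (ψ : Fin ℓ → (Fin n → ℂ)) (p : Fin ℓ → Fin m) :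
    Matrix (Fin m × Fin n) (Fin ℓ) ℂ :=
  Matrix.of fun x k => if x.1 = p k then ψ k x.2 else 0

/-- Compressing `B` by `selector ψ p` picks out one block per entry. -/
lemma compress_apply {n ℓ m : ℕ} (ψ : Fin ℓ → (Fin n → ℂ)) (p : Fin ℓ → Fin m)
    (B : Matrix (Fin m × Fin n) (Fin m × Fin n) ℂ) (k l : Fin ℓ) :
    ((selector ψ p)ᴴ * (B * selector ψ p)) k l =
      star (ψ k) ⬝ᵥ (blockOf B (p k) (p l) *ᵥ ψ l) := by
  simp [Matrix.mul_apply, selector, blockOf, dotProduct, mulVec, Fintype.sum_prod_type,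
    apply_ite star, ite_mul, Finset.sum_ite_irrel]

/-- The independence number of a noncommutative graph is at most its Haemers bound:
if `ψ_1, …, ψ_ℓ` are unit vectors with `⟨ψ_i|A|ψ_j⟩ = 0` for all distinct `i, j` and all
`A ∈ S`, and `B` is an `m × m` block matrix with blocks in `S` whose diagonal blocks sum to
the identity, then `rank B ≥ ℓ`. -/
theorem alpha_le_haemers (n ℓ m : ℕ)
    (S : Submodule ℂ (Matrix (Fin n) (Fin n) ℂ))
    (hstar : ∀ A ∈ S, Aᴴ ∈ S) (hone : (1 : Matrix (Fin n) (Fin n) ℂ) ∈ S)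
    (ψ : Fin ℓ → (Fin n → ℂ))
    (hunit : ∀ i, star (ψ i) ⬝ᵥ ψ i = 1)
    (horth : ∀ i j : Fin ℓ, i ≠ j → ∀ A ∈ S, star (ψ i) ⬝ᵥ (A *ᵥ ψ j) = 0)
    (B : Matrix (Fin m × Fin n) (Fin m × Fin n) ℂ)
    (hblk : ∀ i j : Fin m, blockOf B i j ∈ S)
    (hsum : (∑ i : Fin m, blockOf B i i) = 1) :
    ℓ ≤ B.rank := by
  -- The numbers `⟨ψ_k|B_{i,i}|ψ_k⟩` sum over `i` to `⟨ψ_k|ψ_k⟩ = 1`, so one is nonzero.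
  have hex : ∀ k : Fin ℓ, ∃ i : Fin m, star (ψ k) ⬝ᵥ (blockOf B i i *ᵥ ψ k) ≠ 0 := by
    intro k
    by_contra! h
    have h1 : star (ψ k) ⬝ᵥ ((∑ i : Fin m, blockOf B i i) *ᵥ ψ k) = 0 := by
      rw [Matrix.sum_mulVec, dotProduct_sum]
      exact Finset.sum_eq_zero fun i _ => h i
    rw [hsum, Matrix.one_mulVec, hunit] at h1
    exact one_ne_zero h1
  choose p hp using hex
  have hdiag : (selector ψ p)ᴴ * (B * selector ψ p) =
      Matrix.diagonal fun k => star (ψ k) ⬝ᵥ (blockOf B (p k) (p k) *ᵥ ψ k) := by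
    ext k l
    rw [compress_apply]
    by_cases hkl : k = l
    · subst hkl
      simp
    · rw [Matrix.diagonal_apply_ne _ hkl]
      exact horth k l hkl _ (hblk _ _)
  have hrank : ((selector ψ p)ᴴ * (B * selector ψ p)).rank = ℓ := by
    rw [hdiag, Matrix.rank_of_isUnit, Fintype.card_fin]
    rw [Matrix.isUnit_iff_isUnit_det, Matrix.det_diagonal, isUnit_iff_ne_zero]
    exact Finset.prod_ne_zero_iff.mpr fun k _ => hp k
  calc ℓ = _ := hrank.symm
    _ ≤ (B * selector ψ p).rank := Matrix.rank_mul_le_right _ _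
    _ ≤ B.rank := Matrix.rank_mul_le_left _ _
end
end

section
/- Let S ⊆ M_n(ℂ) be a noncommutative graph and suppose B ∈ M_m(S) satisfies ∑_{i=1}^m B_{i,i} = I_n and rank(B) = k. Then there exist m' ≤ (kn)^2 and B' ∈ M_{m'}(S) with ∑_{i=1}^{m'} B'_{i,i} = I_n and rank(B') ≤ k. In particular, the minimum defining H(S) is attained by some block matrix with block dimension m ≤ n^4. -/
/-!
View the block rows of `B` as `m` vectors `X i`, each an `n`-tuple of elements of the row space
of `B`. They live in a space of dimension `k * n`, so their span has a basis of `m' ≤ k * n`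
elements. Writing the basis as combinations of the `X i` (coefficients `γ`) and the `X i` as
combinations of the basis (coefficients `α`) gives `α * γ * X = X`. The matrix
`B' = (γ ⊗ 1) * B * (α ⊗ 1)` has blocks which are linear combinations of those of `B`, has rank at
most that of `B`, and its diagonal blocks sum to
`∑ i j, (α * γ) j i • B i j = ∑ j, B j j = 1`. This gives the bound `k * n`, which is at most
`(k * n) ^ 2`.

For the second claim, `H(S) ≤ n` by the one-block matrix `I_n`, so a minimizer compressed in this
way has at most `(n * n) ^ 2 = n ^ 4` blocks, and by minimality its rank does not drop.
-/

open Matrix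

noncomputable section

/-- A finite family in a finite-dimensional space factors through a basis of its span. -/
lemma exists_factor_through_span_basis {W : Type*} [AddCommGroup W] [Module ℂ W]
    [FiniteDimensional ℂ W] {m : ℕ} (X : Fin m → W) :
    ∃ d : ℕ, d ≤ Module.finrank ℂ W ∧ ∃ (γ : Matrix (Fin d) (Fin m) ℂ)
      (α : Matrix (Fin m) (Fin d) ℂ), ∀ j, ∑ i, (α * γ) j i • X i = X j := by
  let U := Submodule.span ℂ (Set.range X)
  let b := Module.finBasis ℂ U
  have hb : ∀ a, ∃ c : Fin m → ℂ, ∑ i, c i • X i = (b a : W) := fun a =>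
    (Submodule.mem_span_range_iff_exists_fun ℂ).1 (b a).2
  choose γ hγ using hb
  let x : Fin m → U := fun j => ⟨X j, Submodule.subset_span ⟨j, rfl⟩⟩
  refine ⟨_, Submodule.finrank_le U, Matrix.of γ, Matrix.of fun j a => b.repr (x j) a, fun j => ?_⟩
  have h := congrArg (Subtype.val) (b.sum_repr (x j))
  rw [Submodule.coe_sum] at h
  simp only [Submodule.coe_smul, ← hγ, Finset.smul_sum, smul_smul] at h
  rw [Finset.sum_comm] at h
  simpa only [Matrix.mul_apply, Matrix.of_apply, Finset.sum_smul] using h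

/-- The block rows of `B` are reproduced by `α * γ` with inner dimension at most `rank B * n`,
the dimension of the space of `n`-tuples in the row space of `B`. -/
lemma exists_block_row_factor {n m : ℕ} (B : Matrix (Fin m × Fin n) (Fin m × Fin n) ℂ) :
    ∃ d : ℕ, d ≤ B.rank * n ∧ ∃ (γ : Matrix (Fin d) (Fin m) ℂ) (α : Matrix (Fin m) (Fin d) ℂ),
      ∀ j a q, ∑ i, (α * γ) j i * B (i, a) q = B (j, a) q := by
  let V := Submodule.span ℂ (Set.range B.row)
  let X : Fin m → Fin n → V := fun i a => ⟨B.row (i, a), Submodule.subset_span ⟨(i, a), rfl⟩⟩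
  obtain ⟨d, hd, γ, α, h⟩ := exists_factor_through_span_basis X
  refine ⟨d, ?_, γ, α, fun j a q => ?_⟩
  · rwa [Module.finrank_pi_fintype, Finset.sum_const, Finset.card_univ, Fintype.card_fin,
      smul_eq_mul, mul_comm, ← Matrix.rank_eq_finrank_span_row] at hd
  · have h1 := congrArg (fun f : Fin n → V => (f a : Fin m × Fin n → ℂ) q) (h j)
    simpa [X, Finset.sum_apply, Submodule.coe_sum, Matrix.row] using h1

/-- Compression to at most `rank B * n` blocks. -/
lemma exists_compression {n m : ℕ} (S : Submodule ℂ (Matrix (Fin n) (Fin n) ℂ))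
    (B : Matrix (Fin m × Fin n) (Fin m × Fin n) ℂ)
    (hblk : ∀ i j : Fin m, blockOf B i j ∈ S) (hsum : (∑ i : Fin m, blockOf B i i) = 1) :
    ∃ d : ℕ, d ≤ B.rank * n ∧ ∃ B' : Matrix (Fin d × Fin n) (Fin d × Fin n) ℂ,
      (∀ i j : Fin d, blockOf B' i j ∈ S) ∧ (∑ i : Fin d, blockOf B' i i) = 1 ∧
        B'.rank ≤ B.rank := by
  obtain ⟨d, hd, γ, α, h⟩ := exists_block_row_factor B
  let G : Matrix (Fin d × Fin n) (Fin m × Fin n) ℂ := Matrix.kronecker γ 1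
  let A : Matrix (Fin m × Fin n) (Fin d × Fin n) ℂ := Matrix.kronecker α 1
  have key : ∀ s t, blockOf (G * B * A) s t = ∑ j, ∑ i, (α j t * γ s i) • blockOf B i j := by
    intro s t
    ext a b
    simp only [blockOf, G, A, Matrix.of_apply, Matrix.mul_apply, Fintype.sum_prod_type,
      Matrix.kronecker, Matrix.kroneckerMap_apply, Matrix.one_apply, Matrix.sum_apply,
      Matrix.smul_apply, smul_eq_mul, mul_ite, ite_mul, mul_one, mul_zero, zero_mul,
      Finset.sum_ite_eq, Finset.sum_ite_eq', Finset.mem_univ, if_true, Finset.sum_mul]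
    refine Finset.sum_congr rfl fun j _ => Finset.sum_congr rfl fun i _ => by ring
  refine ⟨d, hd, G * B * A, fun s t => ?_, ?_, ?_⟩
  · rw [key]
    exact S.sum_mem fun j _ => S.sum_mem fun i _ => S.smul_mem _ (hblk i j)
  · rw [← hsum]
    simp only [key]
    rw [Finset.sum_comm]
    refine Finset.sum_congr rfl fun j _ => ?_
    rw [Finset.sum_comm]
    ext a b
    simp only [← Finset.sum_smul]
    simpa [Matrix.sum_apply, blockOf, Matrix.mul_apply] using h j a (j, b)
  · exact (Matrix.rank_mul_le_left _ _).trans (Matrix.rank_mul_le_right _ _)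

/-- The one-block matrix `I_n` is feasible. -/
lemma exists_feasible_rank_le {n : ℕ} (S : Submodule ℂ (Matrix (Fin n) (Fin n) ℂ))
    (hone : (1 : Matrix (Fin n) (Fin n) ℂ) ∈ S) :
    ∃ B : Matrix (Fin 1 × Fin n) (Fin 1 × Fin n) ℂ,
      (∀ i j, blockOf B i j ∈ S) ∧ (∑ i, blockOf B i i) = 1 ∧ B.rank ≤ n := by
  have hblock : ∀ i j : Fin 1, blockOf (1 : Matrix (Fin 1 × Fin n) (Fin 1 × Fin n) ℂ) i j = 1 := by
    intro i j
    ext a b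
    simp [blockOf, Matrix.one_apply, Subsingleton.elim i j]
  refine ⟨1, fun i j => by rwa [hblock], by simp [hblock], ?_⟩
  simp

lemma haemers_le {n m : ℕ} (S : Submodule ℂ (Matrix (Fin n) (Fin n) ℂ))
    (B : Matrix (Fin m × Fin n) (Fin m × Fin n) ℂ)
    (hblk : ∀ i j : Fin m, blockOf B i j ∈ S) (hsum : (∑ i : Fin m, blockOf B i i) = 1) :
    Haemers S ≤ B.rank := by
  unfold Haemers
  exact Nat.sInf_le ⟨m, B, hblk, hsum, rfl⟩

/-- Any feasible block matrix of rank `k` for the Haemers bound can be replaced by a feasible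
one with block dimension at most `(kn)²` and rank at most `k`; in particular the minimum
defining `H(S)` is attained with block dimension at most `n⁴`. -/
theorem haemers_small_block (n : ℕ) (S : Submodule ℂ (Matrix (Fin n) (Fin n) ℂ))
    (hstar : ∀ A ∈ S, Aᴴ ∈ S) (hone : (1 : Matrix (Fin n) (Fin n) ℂ) ∈ S)
    (m k : ℕ) (B : Matrix (Fin m × Fin n) (Fin m × Fin n) ℂ)
    (hblk : ∀ i j : Fin m, blockOf B i j ∈ S)
    (hsum : (∑ i : Fin m, blockOf B i i) = 1)
    (hrank : B.rank = k) :
    (∃ m' : ℕ, m' ≤ (k * n) ^ 2 ∧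
      ∃ B' : Matrix (Fin m' × Fin n) (Fin m' × Fin n) ℂ,
        (∀ i j : Fin m', blockOf B' i j ∈ S) ∧
        (∑ i : Fin m', blockOf B' i i) = 1 ∧ B'.rank ≤ k) ∧
    (∃ m₀ : ℕ, m₀ ≤ n ^ 4 ∧
      ∃ B₀ : Matrix (Fin m₀ × Fin n) (Fin m₀ × Fin n) ℂ,
        (∀ i j : Fin m₀, blockOf B₀ i j ∈ S) ∧
        (∑ i : Fin m₀, blockOf B₀ i i) = 1 ∧ B₀.rank = Haemers S) := by
  constructor
  · obtain ⟨d, hd, B', h1, h2, h3⟩ := exists_compression S B hblk hsum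
    rw [hrank] at hd h3
    exact ⟨d, hd.trans (Nat.le_self_pow two_ne_zero _), B', h1, h2, h3⟩
  · obtain ⟨m₁, B₁, hB₁, hs₁, hr₁⟩ : ∃ m₁ : ℕ,
        ∃ B₁ : Matrix (Fin m₁ × Fin n) (Fin m₁ × Fin n) ℂ, (∀ i j, blockOf B₁ i j ∈ S) ∧
          (∑ i, blockOf B₁ i i) = 1 ∧ B₁.rank = Haemers S :=
      Nat.sInf_mem (s := {k | ∃ m : ℕ, ∃ B : Matrix (Fin m × Fin n) (Fin m × Fin n) ℂ,
        (∀ i j, blockOf B i j ∈ S) ∧ (∑ i, blockOf B i i) = 1 ∧ B.rank = k})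
        ⟨_, m, B, hblk, hsum, rfl⟩
    obtain ⟨d, hd, B', h1, h2, h3⟩ := exists_compression S B₁ hB₁ hs₁
    obtain ⟨E, hE, hEs, hEr⟩ := exists_feasible_rank_le S hone
    rw [hr₁] at hd h3
    have hle : Haemers S ≤ n := (haemers_le S E hE hEs).trans hEr
    refine ⟨d, ?_, B', h1, h2, le_antisymm h3 (haemers_le S B' h1 h2)⟩
    calc d ≤ n * n := hd.trans (Nat.mul_le_mul_right n hle)
      _ ≤ (n * n) ^ 2 := Nat.le_self_pow two_ne_zero _
      _ = n ^ 4 := by ring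
end
end

section
/- Let S ⊆ M_n(ℂ) and T ⊆ M_{n'}(ℂ) be noncommutative graphs, and suppose there is a cohomomorphism from S to T, i.e., there exist m' ∈ ℕ and matrices D_1,…,D_{m'} ∈ M_{n'×n}(ℂ) with ∑_{j=1}^{m'} D_j† D_j = I_n such that D_i† A D_j ∈ S for every A ∈ T and all i,j ∈ [m']. Then H(S) ≤ H(T). -/
/-! Given an optimal block matrix `B` for `T`, with `m × m` blocks, the block matrix for `S`
has blocks `Dⱼ† B_{i,i'} D_{j'}`, indexed by the pairs `(i, j)`. These blocks lie in `S` by the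
cohomomorphism property, and the diagonal ones sum to `∑ⱼ Dⱼ† (∑ᵢ B_{i,i}) Dⱼ = ∑ⱼ Dⱼ† Dⱼ = 1`.
The new matrix equals `Mᴴ B M` with `M = I_m ⊗ [D₁ ⋯ D_{m'}]`, so its rank is at most that
of `B`. -/

open Matrix

noncomputable section

/-- The matrix `I_m ⊗ [D₁ ⋯ D_{m'}]`, the pairs `(i, j) ∈ [m] × [m']` being numbered by
`finProdFinEquiv`. -/
def krausRow (m : ℕ) {m' n n' : ℕ} (D : Fin m' → Matrix (Fin n') (Fin n) ℂ) :
    Matrix (Fin m × Fin n') (Fin (m * m') × Fin n) ℂ :=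
  Matrix.of fun a p =>
    if a.1 = (finProdFinEquiv.symm p.1).1 then D (finProdFinEquiv.symm p.1).2 a.2 p.2 else 0

lemma blockOf_krausRow_conj {m m' n n' : ℕ} (D : Fin m' → Matrix (Fin n') (Fin n) ℂ)
    (B : Matrix (Fin m × Fin n') (Fin m × Fin n') ℂ) (p q : Fin (m * m')) :
    blockOf ((krausRow m D)ᴴ * B * krausRow m D) p q =
      (D (finProdFinEquiv.symm p).2)ᴴ *
        blockOf B (finProdFinEquiv.symm p).1 (finProdFinEquiv.symm q).1 *
          D (finProdFinEquiv.symm q).2 := by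
  ext x y
  simp only [blockOf, krausRow, Matrix.of_apply, Matrix.mul_apply, Matrix.conjTranspose_apply,
    Fintype.sum_prod_type, apply_ite star, star_zero, ite_mul, mul_ite, zero_mul, mul_zero]
  rw [Finset.sum_eq_single (finProdFinEquiv.symm q).1
    (fun b _ hb => by simp only [if_neg hb, Finset.sum_const_zero]) (by simp)]
  refine Finset.sum_congr rfl fun c _ => ?_
  rw [if_pos rfl, Finset.sum_eq_single (finProdFinEquiv.symm p).1
    (fun b _ hb => by simp only [if_neg hb, Finset.sum_const_zero]) (by simp)]
  simp

/-- The Haemers bound is monotone under cohomomorphisms of noncommutative graphs: if there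
is a quantum channel with Choi–Kraus operators `D_1, …, D_{m'} : M_{n'×n}(ℂ)` such that
`Dᵢ† A Dⱼ ∈ S` for every `A ∈ T` and all `i, j`, then `H(S) ≤ H(T)`. -/
theorem haemers_mono_of_cohom (n n' : ℕ)
    (S : Submodule ℂ (Matrix (Fin n) (Fin n) ℂ))
    (T : Submodule ℂ (Matrix (Fin n') (Fin n') ℂ))
    (hSstar : ∀ A ∈ S, Aᴴ ∈ S) (hSone : (1 : Matrix (Fin n) (Fin n) ℂ) ∈ S)
    (hTstar : ∀ A ∈ T, Aᴴ ∈ T) (hTone : (1 : Matrix (Fin n') (Fin n') ℂ) ∈ T)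
    (m' : ℕ) (D : Fin m' → Matrix (Fin n') (Fin n) ℂ)
    (hD : (∑ j, (D j)ᴴ * D j) = 1)
    (hco : ∀ A ∈ T, ∀ i j : Fin m', (D i)ᴴ * A * D j ∈ S) :
    Haemers S ≤ Haemers T := by
  have hne : { k : ℕ | ∃ m : ℕ, ∃ B : Matrix (Fin m × Fin n') (Fin m × Fin n') ℂ,
      (∀ i j : Fin m, blockOf B i j ∈ T) ∧
      (∑ i : Fin m, blockOf B i i) = 1 ∧ B.rank = k }.Nonempty := by
    -- The identity matrix, as a single block, is admissible, so the infimum is attained.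
    have h1 : ∀ i j : Fin 1,
        blockOf (1 : Matrix (Fin 1 × Fin n') (Fin 1 × Fin n') ℂ) i j = 1 := by
      intro i j
      ext a b
      simp [blockOf, Matrix.one_apply, Subsingleton.elim i j]
    exact ⟨_, 1, 1, fun i j => by rw [h1]; exact hTone, by simp [h1], rfl⟩
  obtain ⟨m, B, hB, hB1, hr⟩ := Nat.sInf_mem hne
  have hle : ((krausRow m D)ᴴ * B * krausRow m D).rank ≤ B.rank :=
    (Matrix.rank_mul_le_left _ _).trans (Matrix.rank_mul_le_right _ _)
  refine le_trans (Nat.sInf_le ⟨m * m', (krausRow m D)ᴴ * B * krausRow m D, ?_, ?_, rfl⟩)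
    (hle.trans hr.le)
  · intro p q
    rw [blockOf_krausRow_conj]
    exact hco _ (hB _ _) _ _
  · simp only [blockOf_krausRow_conj]
    rw [Equiv.sum_comp finProdFinEquiv.symm
      (fun p : Fin m × Fin m' => (D p.2)ᴴ * blockOf B p.1 p.1 * D p.2),
      Fintype.sum_prod_type_right, ← hD]
    refine Finset.sum_congr rfl fun j _ => ?_
    dsimp only
    rw [← Matrix.sum_mul, ← Matrix.mul_sum, hB1, Matrix.mul_one]
end
end

section
/- For every n ≥ 1, the noncommutative graph D_n ⊆ M_n(ℂ) of all n×n diagonal matrices satisfies H(D_n) = n. -/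
/-!
The upper bound is attained by the single-block matrix `B = I_n` (`m = 1`).

For the lower bound, let `B` be feasible. For each `a` the `(a, a)` entries of the diagonal blocks
sum to `1`, so some block `B_{f a, f a}` has a nonzero `(a, a)` entry. Restricting `B` to the rows
and columns `(f a, a)` gives an `n × n` matrix whose off-diagonal entries are off-diagonal entries
of blocks of `B`, hence zero, and whose diagonal entries are nonzero. So `B` has an `n × n`
submatrix of rank `n` (`le_rank_of_feasible`).
-/

open Matrix

noncomputable section

/-- The subspace of all `n × n` diagonal complex matrices. -/
def diagSub (n : ℕ) : Submodule ℂ (Matrix (Fin n) (Fin n) ℂ) where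
  carrier := { A | ∀ i j : Fin n, i ≠ j → A i j = 0 }
  add_mem' := by
    intro A B hA hB i j hij
    simp [Matrix.add_apply, hA i j hij, hB i j hij]
  zero_mem' := by
    intro i j hij
    simp
  smul_mem' := by
    intro c A hA i j hij
    simp [Matrix.smul_apply, hA i j hij]

theorem le_rank_of_feasible {n m : ℕ} (B : Matrix (Fin m × Fin n) (Fin m × Fin n) ℂ)
    (hB : ∀ i j : Fin m, blockOf B i j ∈ diagSub n)
    (hsum : (∑ i : Fin m, blockOf B i i) = 1) : n ≤ B.rank := by
  have hex : ∀ a : Fin n, ∃ i : Fin m, B (i, a) (i, a) ≠ 0 := by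
    intro a
    by_contra! h
    have h1 := congrFun (congrFun hsum a) a
    simp [Matrix.sum_apply, blockOf, h] at h1
  choose f hf using hex
  have hsub : B.submatrix (fun a => (f a, a)) (fun a => (f a, a)) =
      diagonal fun a => B (f a, a) (f a, a) := by
    ext a b
    by_cases hab : a = b
    · subst hab
      simp
    · simpa [hab, blockOf] using hB (f a) (f b) a b hab
  calc n = (diagonal fun a => B (f a, a) (f a, a)).rank := by
        classical
        simp [Matrix.rank_diagonal, hf]
    _ ≤ B.rank := hsub ▸ rank_submatrix_le B _ _

/-- For every `n ≥ 1`, the Haemers bound of the noncommutative graph of all `n × n`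
diagonal matrices equals `n`. -/
theorem haemers_diagonal (n : ℕ) (hn : 1 ≤ n) : Haemers (diagSub n) = n := by
  have hmem : n ∈ { k : ℕ | ∃ m : ℕ, ∃ B : Matrix (Fin m × Fin n) (Fin m × Fin n) ℂ,
      (∀ i j : Fin m, blockOf B i j ∈ diagSub n) ∧
      (∑ i : Fin m, blockOf B i i) = 1 ∧ B.rank = k } := by
    refine ⟨1, 1, ?_, ?_, by simp⟩
    · intro i j a b hab
      simp [blockOf, Matrix.one_apply, hab]
    · ext a b
      simp [blockOf, Matrix.one_apply]
  apply le_antisymm (Nat.sInf_le hmem)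
  -- `sInf ∅ = 0` in `ℕ`, so the lower bound also needs the set of feasible ranks to be nonempty.
  refine le_csInf ⟨n, hmem⟩ ?_
  rintro k ⟨m, B, hB, hsum, rfl⟩
  exact le_rank_of_feasible B hB hsum
end
end
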